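/- Let 𝓖 be a singular Riemannian foliation on the sphere S^k with no 0-dimensional leaves. Then the first basic cohomology H¹(S^k/𝓖) vanishes. (For k ≠ 1 this follows from H¹(S^k) = 0 and injectivity of H¹(S^k/𝓖) → H¹(S^k); for k = 1 the foliation must be the one-leaf foliation, for which basic 1-forms capture only the zero class.) -/

import Mathlib

open Metric
open scoped Manifold

/-!
Only the sphere's topology matters: a 1-form that is exact on two open sets with connected
intersection is exact on their union, because two primitives differ by a constant on the
intersection. The sphere is the union of two punctured spheres, each a chart onto Euclidean space,
where the Poincaré lemma applies. Their intersection is Euclidean space minus a point, connected as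
soon as the dimension is at least `2`. On the circle this argument fails, and there the foliation
enters: a linear form on a line that kills a nonzero vector is zero.
-/

section LocallyExactForms

open Set Filter
open scoped Topology ContDiff

variable {E : Type*} [NormedAddCommGroup E] [NormedSpace ℝ E]
  {M : Type*} [TopologicalSpace M] [ChartedSpace E M]
  {E' : Type*} [NormedAddCommGroup E'] [NormedSpace ℝ E']
  {N : Type*} [TopologicalSpace N] [ChartedSpace E' N]
  {F : Type*} [NormedAddCommGroup F] [NormedSpace ℝ F]

/-- `f` is a primitive of the `F`-valued 1-form `α` on `U`, that is `df = α` there. No regularity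
beyond differentiability is asked of `f`: it is inherited from local primitives. -/
def IsPrimitiveOn (α : (x : M) → TangentSpace 𝓘(ℝ, E) x →L[ℝ] F) (f : M → F) (U : Set M) : Prop :=
  ∀ x ∈ U, HasMFDerivAt 𝓘(ℝ, E) 𝓘(ℝ, F) f x (α x)

/-- The 1-form `α` is closed on `U`, in the form given by the Poincaré lemma: near each point of
`U` it has a primitive of class `C^n`. -/
def IsLocallyExactOn (n : ℕ∞ω) (α : (x : M) → TangentSpace 𝓘(ℝ, E) x →L[ℝ] F) (U : Set M) :
    Prop :=
  ∀ x ∈ U, ∃ V ∈ 𝓝 x, ∃ f : M → F, ContMDiffAt 𝓘(ℝ, E) 𝓘(ℝ, F) n f x ∧ IsPrimitiveOn α f V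

/-- The pullback `φ^*α` of a 1-form `α` along `φ`, used to move between a manifold and a chart. It
has its junk value `0` where `φ` is not differentiable. -/
noncomputable def pullbackForm (φ : N → M) (α : (x : M) → TangentSpace 𝓘(ℝ, E) x →L[ℝ] F)
    (y : N) : TangentSpace 𝓘(ℝ, E') y →L[ℝ] F :=
  (α (φ y)).comp (mfderiv 𝓘(ℝ, E') 𝓘(ℝ, E) φ y)

variable {α : (x : M) → TangentSpace 𝓘(ℝ, E) x →L[ℝ] F} {f g : M → F} {U V : Set M} {x : M}
  {φ : N → M} {S : Set N} {n : ℕ∞ω}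

theorem IsPrimitiveOn.mono (hf : IsPrimitiveOn α f U) (hVU : V ⊆ U) : IsPrimitiveOn α f V :=
  fun x hx => hf x (hVU hx)

theorem IsPrimitiveOn.congr (hf : IsPrimitiveOn α f U) (hU : IsOpen U) (hgf : EqOn g f U) :
    IsPrimitiveOn α g U :=
  fun x hx => (hf x hx).congr_of_eventuallyEq (hgf.eventuallyEq_of_mem (hU.mem_nhds hx))

theorem exists_isPrimitiveOn_of_eq_zero (hα : ∀ x ∈ U, α x = 0) : ∃ f, IsPrimitiveOn α f U :=
  ⟨fun _ => 0, fun x hx => (hasMFDerivAt_const 0 x).congr_mfderiv (hα x hx).symm⟩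

theorem IsPrimitiveOn.union (hU : IsPrimitiveOn α f U) (hV : IsPrimitiveOn α f V) :
    IsPrimitiveOn α f (U ∪ V) :=
  fun x hx => hx.elim (hU x) (hV x)

theorem IsPrimitiveOn.add_const (hf : IsPrimitiveOn α f U) (c : F) :
    IsPrimitiveOn α (fun x => f x + c) U := fun x hx =>
  ((hf x hx).add (hasMFDerivAt_const c x)).congr_mfderiv (add_zero (α x))

theorem IsPrimitiveOn.comp (hf : IsPrimitiveOn α f U)
    (hφ : ∀ y ∈ S, MDifferentiableAt 𝓘(ℝ, E') 𝓘(ℝ, E) φ y) (hSU : MapsTo φ S U) :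
    IsPrimitiveOn (pullbackForm (E' := E') φ α) (f ∘ φ) S :=
  fun y hy => (hf (φ y) (hSU hy)).comp y (hφ y hy).hasMFDerivAt

theorem IsPrimitiveOn.of_mfderiv_eq (hU : IsOpen U) (hn : n ≠ 0)
    (hf : ContMDiffOn 𝓘(ℝ, E) 𝓘(ℝ, F) n f U)
    (hfα : ∀ x ∈ U, ∀ w : TangentSpace 𝓘(ℝ, E) x, mfderiv 𝓘(ℝ, E) 𝓘(ℝ, F) f x w = α x w) :
    IsPrimitiveOn α f U := fun x hx =>
  ((hf.contMDiffAt (hU.mem_nhds hx)).mdifferentiableAt hn).hasMFDerivAt.congr_mfderiv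
    (ContinuousLinearMap.ext (hfα x hx))

theorem pullbackForm_comp_symm {e : OpenPartialHomeomorph M N}
    (he : e.MDifferentiable 𝓘(ℝ, E) 𝓘(ℝ, E')) (hx : x ∈ e.source) :
    pullbackForm (E' := E) e (pullbackForm (E' := E') e.symm α) x = α x := by
  ext w
  -- Both tangent spaces unfold to `E`, which lets the base point be rewritten.
  have hbase {y : M} (hyx : y = x) (u : E) : (α y u : F) = α x u := by rw [hyx]
  exact (hbase (e.left_inv hx) _).trans (congrArg (α x) congr($(he.symm_comp_deriv hx) w))

theorem IsPrimitiveOn.eventuallyEq_add_const [IsManifold 𝓘(ℝ, E) 1 M] (hf : IsPrimitiveOn α f U)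
    (hg : IsPrimitiveOn α g U) (hU : U ∈ 𝓝 x) : ∃ c, ∀ᶠ y in 𝓝 x, f y = g y + c := by
  set e := chartAt E x
  have hx : x ∈ e.source := mem_chart_source E x
  have hpre : e.target ∩ e.symm ⁻¹' U ∈ 𝓝 (e x) :=
    inter_mem (e.open_target.mem_nhds (e.map_source hx))
      ((e.continuousAt_symm (e.map_source hx)).preimage_mem_nhds (by rwa [e.left_inv hx]))
  obtain ⟨r, hr, hball⟩ := Metric.mem_nhds_iff.1 hpre
  let β : E → E →L[ℝ] F := pullbackForm (E' := E) e.symm α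
  have hderiv {h : M → F} (hh : IsPrimitiveOn α h U) :
      ∀ z ∈ ball (e x) r, HasFDerivAt (h ∘ e.symm) (β z) z :=
    fun z hz => (hh.comp (fun z hz => (mdifferentiable_chart x).mdifferentiableAt_symm (hball hz).1)
      (fun z hz => (hball hz).2) z hz).hasFDerivAt
  obtain ⟨c, hc⟩ := isOpen_ball.exists_eq_add_of_fderiv_eq isPreconnected_ball
    (fun z hz => (hderiv hf z hz).differentiableAt.differentiableWithinAt)
    (fun z hz => (hderiv hg z hz).differentiableAt.differentiableWithinAt)
    (fun z hz => (hderiv hf z hz).fderiv.trans (hderiv hg z hz).fderiv.symm)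
  refine ⟨c, ?_⟩
  filter_upwards [e.open_source.mem_nhds hx,
    (e.continuousAt hx).preimage_mem_nhds (ball_mem_nhds (e x) hr)] with y hy hyr
  simpa [e.left_inv hy] using hc hyr

theorem IsPrimitiveOn.contMDiffAt [IsManifold 𝓘(ℝ, E) 1 M] (hf : IsPrimitiveOn α f U)
    (hα : IsLocallyExactOn n α U) (hU : U ∈ 𝓝 x) : ContMDiffAt 𝓘(ℝ, E) 𝓘(ℝ, F) n f x := by
  obtain ⟨V, hV, g, hg, hgα⟩ := hα x (mem_of_mem_nhds hU)
  obtain ⟨c, hc⟩ := (hf.mono inter_subset_left).eventuallyEq_add_const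
    (hgα.mono inter_subset_right) (inter_mem hU hV)
  exact (hg.add contMDiffAt_const).congr_of_eventuallyEq hc

theorem IsPrimitiveOn.exists_eqOn_add_const [IsManifold 𝓘(ℝ, E) 1 M] (hf : IsPrimitiveOn α f U)
    (hg : IsPrimitiveOn α g U) (hU : IsOpen U) (hconn : IsPreconnected U) :
    ∃ c, EqOn f (fun x => g x + c) U := by
  have hlocal : IsLocallyConstant (U.domRestrict (f - g)) := by
    rw [IsLocallyConstant.iff_eventually_eq]
    intro x
    obtain ⟨c, hc⟩ := hf.eventuallyEq_add_const hg (hU.mem_nhds x.2)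
    have hsub : ∀ᶠ y in 𝓝 (x : M), f y - g y = f x - g x := by
      filter_upwards [hc] with y hy
      rw [hy, hc.self_of_nhds, add_sub_cancel_left, add_sub_cancel_left]
    exact continuousAt_subtype_val.eventually hsub
  have : PreconnectedSpace U := isPreconnected_iff_preconnectedSpace.1 hconn
  obtain ⟨c, hc⟩ := hlocal.exists_eq_const
  exact ⟨c, fun x hx => sub_eq_iff_eq_add'.1 congr($hc ⟨x, hx⟩)⟩

theorem exists_isPrimitiveOn_union [IsManifold 𝓘(ℝ, E) 1 M] (hf : IsPrimitiveOn α f U)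
    (hg : IsPrimitiveOn α g V) (hU : IsOpen U) (hV : IsOpen V) (hconn : IsPreconnected (U ∩ V)) :
    ∃ h, IsPrimitiveOn α h (U ∪ V) := by
  classical
  obtain ⟨c, hc⟩ := (hf.mono inter_subset_left).exists_eqOn_add_const
    (hg.mono inter_subset_right) (hU.inter hV) hconn
  refine ⟨U.piecewise f fun x => g x + c, (hf.congr hU (piecewise_eqOn ..)).union
    ((hg.add_const c).congr hV fun x hx => ?_)⟩
  by_cases hxU : x ∈ U
  · rw [piecewise_eq_of_mem _ _ _ hxU, hc ⟨hxU, hx⟩]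
  · rw [piecewise_eq_of_notMem _ _ _ hxU]

theorem IsLocallyExactOn.of_mfderiv_eq (hn : n ≠ 0)
    (h : ∀ x ∈ U, ∃ V : Set M, IsOpen V ∧ x ∈ V ∧ ∃ f : M → F,
      ContMDiffOn 𝓘(ℝ, E) 𝓘(ℝ, F) n f V ∧
        ∀ y ∈ V, ∀ w : TangentSpace 𝓘(ℝ, E) y, mfderiv 𝓘(ℝ, E) 𝓘(ℝ, F) f y w = α y w) :
    IsLocallyExactOn n α U := fun x hx =>
  let ⟨V, hV, hxV, f, hf, hfα⟩ := h x hx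
  ⟨V, hV.mem_nhds hxV, f, hf.contMDiffAt (hV.mem_nhds hxV), .of_mfderiv_eq hV hn hf hfα⟩

theorem IsLocallyExactOn.mono (hα : IsLocallyExactOn n α U) (hVU : V ⊆ U) :
    IsLocallyExactOn n α V :=
  fun x hx => hα x (hVU hx)

theorem IsLocallyExactOn.of_le {m : ℕ∞ω} (hα : IsLocallyExactOn n α U) (hmn : m ≤ n) :
    IsLocallyExactOn m α U := fun x hx =>
  let ⟨V, hV, f, hf, hfα⟩ := hα x hx
  ⟨V, hV, f, hf.of_le hmn, hfα⟩

theorem IsLocallyExactOn.comp (hα : IsLocallyExactOn n α U) (hS : IsOpen S) (hn : n ≠ 0)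
    (hφ : ContMDiffOn 𝓘(ℝ, E') 𝓘(ℝ, E) n φ S) (hSU : MapsTo φ S U) :
    IsLocallyExactOn n (pullbackForm (E' := E') φ α) S := by
  intro y hy
  obtain ⟨V, hV, f, hf, hfα⟩ := hα (φ y) (hSU hy)
  have hφS {z : N} (hz : z ∈ S) : ContMDiffAt 𝓘(ℝ, E') 𝓘(ℝ, E) n φ z :=
    hφ.contMDiffAt (hS.mem_nhds hz)
  refine ⟨S ∩ φ ⁻¹' V, inter_mem (hS.mem_nhds hy) ((hφS hy).continuousAt.preimage_mem_nhds hV),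
    f ∘ φ, hf.comp y (hφS hy), hfα.comp (fun z hz => (hφS hz.1).mdifferentiableAt hn)
      fun z hz => hz.2⟩

theorem exists_forall_hasFDerivAt_of_locally_exact [CompleteSpace F] {β : E → E →L[ℝ] F}
    {s : Set E} (hs : IsOpen s) (hconvex : Convex ℝ s)
    (hβ : ∀ z ∈ s, ∃ f : E → F, ContDiffAt ℝ 2 f z ∧ ∀ᶠ y in 𝓝 z, HasFDerivAt f (β y) y) :
    ∃ f, ∀ z ∈ s, HasFDerivAt f (β z) z := by
  have hlocal : ∀ z ∈ s, ∃ f : E → F, ContDiffAt ℝ 2 f z ∧ β =ᶠ[𝓝 z] fderiv ℝ f := fun z hz =>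
    let ⟨f, hf, hfβ⟩ := hβ z hz
    ⟨f, hf, hfβ.mono fun _ hy => hy.fderiv.symm⟩
  have hdiff : DifferentiableOn ℝ β s := fun z hz => by
    obtain ⟨f, hf, hfβ⟩ := hlocal z hz
    exact (((hf.fderiv_right (m := 1) le_rfl).differentiableAt one_ne_zero).congr_of_eventuallyEq
      hfβ).differentiableWithinAt
  have hsymm : ∀ z ∈ s, ∀ v w, fderiv ℝ β z v w = fderiv ℝ β z w v := fun z hz v w => by
    obtain ⟨f, hf, hfβ⟩ := hlocal z hz
    rw [hfβ.fderiv_eq]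
    exact hf.isSymmSndFDerivAt (by simp) v w
  exact hconvex.exists_forall_hasFDerivAt_of_fderiv_symmetric hs hdiff hsymm

theorem IsLocallyExactOn.exists_isPrimitiveOn_of_convex [CompleteSpace F]
    {β : (z : E) → TangentSpace 𝓘(ℝ, E) z →L[ℝ] F} {s : Set E} (hβ : IsLocallyExactOn 2 β s)
    (hs : IsOpen s) (hconvex : Convex ℝ s) : ∃ f, IsPrimitiveOn β f s := by
  obtain ⟨f, hf⟩ := exists_forall_hasFDerivAt_of_locally_exact (β := β) hs hconvex fun z hz =>
    let ⟨V, hV, f, hf, hfβ⟩ := hβ z hz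
    ⟨f, hf.contDiffAt, by filter_upwards [hV] with y hy using (hfβ y hy).hasFDerivAt⟩
  exact ⟨f, fun z hz => (hf z hz).hasMFDerivAt⟩

theorem IsLocallyExactOn.exists_isPrimitiveOn_source [CompleteSpace F]
    {e : OpenPartialHomeomorph M E} (hα : IsLocallyExactOn 2 α e.source)
    (he : e ∈ IsManifold.maximalAtlas 𝓘(ℝ, E) 2 M) (hconvex : Convex ℝ e.target) :
    ∃ f, IsPrimitiveOn α f e.source := by
  obtain ⟨h, hh⟩ := (hα.comp e.open_target two_ne_zero (contMDiffOn_symm_of_mem_maximalAtlas he)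
    e.mapsTo_symm).exists_isPrimitiveOn_of_convex e.open_target hconvex
  have hediff : e.MDifferentiable 𝓘(ℝ, E) 𝓘(ℝ, E) :=
    ⟨(contMDiffOn_of_mem_maximalAtlas he).mdifferentiableOn two_ne_zero,
      (contMDiffOn_symm_of_mem_maximalAtlas he).mdifferentiableOn two_ne_zero⟩
  have hpull := hh.comp (fun x hx => hediff.mdifferentiableAt hx) e.mapsTo
  exact ⟨h ∘ e, fun x hx => (hpull x hx).congr_mfderiv (pullbackForm_comp_symm hediff hx)⟩

end LocallyExactForms

theorem eq_zero_of_finrank_eq_one_of_apply_eq_zero {K V W : Type*} [DivisionRing K]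
    [AddCommGroup V] [Module K V] [AddCommGroup W] [Module K W] {f : V →ₗ[K] W} {v : V}
    (hV : Module.finrank K V = 1) (hv : v ≠ 0) (hfv : f v = 0) : f = 0 := by
  ext w
  obtain ⟨c, rfl⟩ := (finrank_eq_one_iff_of_nonzero' v hv).1 hV w
  rw [map_smul, hfv, smul_zero, LinearMap.zero_apply]

section Sphere

open Set
open scoped ContDiff

variable {E : Type*} [NormedAddCommGroup E] [InnerProductSpace ℝ E] {k : ℕ}
  [Fact (Module.finrank ℝ E = k + 1)]
  {F : Type*} [NormedAddCommGroup F] [NormedSpace ℝ F]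

theorem isPreconnected_sphere_compl_inter_compl (hk : 2 ≤ k) {v w : sphere (0 : E) 1}
    (hvw : v ≠ w) : IsPreconnected ({v}ᶜ ∩ {w}ᶜ : Set (sphere (0 : E) 1)) := by
  set e := stereographic' k v
  have hw : w ∈ e.source := by simpa [e] using hvw.symm
  have hrank : 1 < Module.rank ℝ (EuclideanSpace ℝ (Fin k)) := by
    rw [← Module.finrank_eq_rank, finrank_euclideanSpace_fin]
    exact_mod_cast hk
  have himage : ({v}ᶜ ∩ {w}ᶜ : Set (sphere (0 : E) 1)) = e.symm '' {e w}ᶜ := by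
    rw [← stereographic'_source (n := k), e.symm.image_eq_target_inter_inv_preimage (by simp [e])]
    ext x
    simp only [OpenPartialHomeomorph.symm_target, OpenPartialHomeomorph.symm_symm, mem_inter_iff,
      mem_compl_iff, mem_singleton_iff, mem_preimage]
    exact and_congr_right fun hx => not_congr (e.injOn.eq_iff hx hw).symm
  rw [himage]
  exact (isConnected_compl_singleton_of_one_lt_rank hrank _).isPreconnected.image _
    (e.continuousOn_symm.mono (by simp [e]))

theorem IsLocallyExactOn.exists_isPrimitiveOn_univ_sphere [CompleteSpace F] (hk : 2 ≤ k)
    {α : (x : sphere (0 : E) 1) → TangentSpace (𝓡 k) x →L[ℝ] F}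
    (hα : IsLocallyExactOn 2 α univ) : ∃ f, IsPrimitiveOn α f univ := by
  have : Nontrivial E := Module.nontrivial_of_finrank_pos (R := ℝ)
    (by rw [Fact.out (p := Module.finrank ℝ E = k + 1)]; lia)
  obtain ⟨v⟩ : Nonempty (sphere (0 : E) 1) :=
    (NormedSpace.sphere_nonempty.2 zero_le_one).to_subtype
  have hpunctured (v : sphere (0 : E) 1) : ∃ f, IsPrimitiveOn α f {v}ᶜ := by
    rw [← stereographic'_source (n := k)]
    exact (hα.mono (subset_univ _)).exists_isPrimitiveOn_source
      (IsManifold.subset_maximalAtlas ⟨v, rfl⟩) (by simp [convex_univ])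
  obtain ⟨f, hf⟩ := hpunctured v
  obtain ⟨g, hg⟩ := hpunctured (-v)
  have hv : v ≠ -v := ne_neg_of_mem_unit_sphere ℝ v
  have hcover : ({v}ᶜ ∪ {-v}ᶜ : Set (sphere (0 : E) 1)) = univ := by
    rw [← compl_inter, (disjoint_singleton.2 hv).inter_eq, compl_empty]
  exact hcover ▸ exists_isPrimitiveOn_union hf hg isOpen_compl_singleton isOpen_compl_singleton
    (isPreconnected_sphere_compl_inter_compl hk hv)

theorem stmt_10_general [CompleteSpace F] {n : ℕ∞ω} (hn : 2 ≤ n)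
    {𝒱 : Set ((x : sphere (0 : E) 1) → TangentSpace (𝓡 k) x)}
    (h𝒱 : k = 1 → ∀ x, ∃ V ∈ 𝒱, V x ≠ 0)
    {α : (x : sphere (0 : E) 1) → TangentSpace (𝓡 k) x →L[ℝ] F}
    (hbasic : ∀ V ∈ 𝒱, ∀ x, α x (V x) = 0) (hα : IsLocallyExactOn n α univ) :
    ∃ f : sphere (0 : E) 1 → F, ContMDiff (𝓡 k) 𝓘(ℝ, F) n f ∧
      (∀ V ∈ 𝒱, ∀ x, mfderiv (𝓡 k) 𝓘(ℝ, F) f x (V x) = 0) ∧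
      ∀ (x : sphere (0 : E) 1) (w : TangentSpace (𝓡 k) x),
        mfderiv (𝓡 k) 𝓘(ℝ, F) f x w = α x w := by
  obtain ⟨f, hf⟩ : ∃ f, IsPrimitiveOn α f univ := by
    obtain rfl | rfl | hk : k = 0 ∨ k = 1 ∨ 2 ≤ k := by lia
    · have hzero (x) : α x = 0 := by
        have : Subsingleton (TangentSpace (𝓡 0) x) :=
          inferInstanceAs (Subsingleton (EuclideanSpace ℝ (Fin 0)))
        exact Subsingleton.elim _ _
      exact exists_isPrimitiveOn_of_eq_zero fun x _ => hzero x
    · exact exists_isPrimitiveOn_of_eq_zero fun x _ =>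
        let ⟨V, hV, hVx⟩ := h𝒱 rfl x
        ContinuousLinearMap.coe_injective <|
          eq_zero_of_finrank_eq_one_of_apply_eq_zero finrank_euclideanSpace_fin hVx (hbasic V hV x)
    · exact (hα.of_le hn).exists_isPrimitiveOn_univ_sphere hk
  have hmfderiv (x : sphere (0 : E) 1) (w : TangentSpace (𝓡 k) x) :
      mfderiv (𝓡 k) 𝓘(ℝ, F) f x w = α x w := congr($((hf x trivial).mfderiv) w)
  exact ⟨f, fun x => hf.contMDiffAt hα Filter.univ_mem,
    fun V hV x => (hmfderiv x (V x)).trans (hbasic V hV x), hmfderiv⟩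

end Sphere

/-- For a singular Riemannian foliation `𝓖` on the sphere `S^k` with no
`0`-dimensional leaves (the tangent distribution, spanned by the vector fields `𝒱`, vanishes
nowhere), the first basic cohomology vanishes: every closed basic 1-form has a basic
primitive. -/
theorem stmt_10 (k : ℕ)
    [Fact (Module.finrank ℝ (EuclideanSpace ℝ (Fin (k + 1))) = k + 1)]
    (𝒱 : Set ((x : sphere (0 : EuclideanSpace ℝ (Fin (k + 1))) 1) →
      TangentSpace (𝓡 k) x))
    -- no 0-dimensional leaves: the leaves' tangent spaces are nowhere zero
    (h𝒱 : ∀ x : sphere (0 : EuclideanSpace ℝ (Fin (k + 1))) 1, ∃ V ∈ 𝒱, V x ≠ 0) :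
    ∀ ω : (x : sphere (0 : EuclideanSpace ℝ (Fin (k + 1))) 1) → TangentSpace (𝓡 k) x →L[ℝ] ℝ,
      -- `ω` basic
      (∀ V ∈ 𝒱, ∀ x, ω x (V x) = 0) →
      -- `ω` closed (it admits local primitives)
      (∀ x : sphere (0 : EuclideanSpace ℝ (Fin (k + 1))) 1,
        ∃ U : Set (sphere (0 : EuclideanSpace ℝ (Fin (k + 1))) 1), IsOpen U ∧ x ∈ U ∧
        ∃ hloc : sphere (0 : EuclideanSpace ℝ (Fin (k + 1))) 1 → ℝ,
          ContMDiffOn (𝓡 k) (modelWithCornersSelf ℝ ℝ) (⊤ : ℕ∞) hloc U ∧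
          ∀ y ∈ U, ∀ w : TangentSpace (𝓡 k) y,
            mfderiv (𝓡 k) (modelWithCornersSelf ℝ ℝ) hloc y w = ω y w) →
      -- then `ω` has a basic primitive: `[ω] = 0` in `H¹(S^k/𝓖)`
      ∃ f : sphere (0 : EuclideanSpace ℝ (Fin (k + 1))) 1 → ℝ,
        ContMDiff (𝓡 k) (modelWithCornersSelf ℝ ℝ) (⊤ : ℕ∞) f ∧
        (∀ V ∈ 𝒱, ∀ x, mfderiv (𝓡 k) (modelWithCornersSelf ℝ ℝ) f x (V x) = 0) ∧
        ∀ (x : sphere (0 : EuclideanSpace ℝ (Fin (k + 1))) 1) (w : TangentSpace (𝓡 k) x),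
          mfderiv (𝓡 k) (modelWithCornersSelf ℝ ℝ) f x w = ω x w := by
  exact fun ω hbasic hω => stmt_10_general (by norm_cast) (fun _ => h𝒱) hbasic
    (.of_mfderiv_eq (by simp) fun x _ => hω x)
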